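/- Let G be a Moore graph of degree 57, let x, y be adjacent vertices of G, and let Γ be the induced subgraph of G on the vertices at distance 2 from both x and y. Let u, v, w be vertices of Γ with pairwise distances U = d(v,w), V = d(u,w), W = d(u,v) (distances in Γ), where U ≥ V ≥ W. If exactly one of U, V, W equals 3, then the number of vertices z of Γ with d(z,u) = d(z,v) = d(z,w) = 3 is 1. -/

import Mathlib

open SimpleGraph

/-!
Every vertex `z` of `Γ` has a unique common neighbour `a(z)` with `x` and a unique common neighbour
`b(z)` with `y`, and `z ↦ (a(z), b(z))` identifies the vertices of `Γ` with the cells of a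
`56 × 56` grid. Two distinct vertices of `Γ` are at distance 3 exactly when they lie on a common
line (row or column) of the grid: otherwise they are adjacent, or their unique common neighbour in
`G` lies in `Γ` (`dist_eq_three_iff`). For collinear vertices the path of length 3 is produced by
`exists_path_three`, which is the only place where the degree 57 is used.

As distances in `Γ` are at most 3, the hypothesis says that `v, w` lie on a line `ℓ` while `u` is
collinear with neither. A vertex collinear with all three cannot be off `ℓ`, since it would lie on
the two distinct parallel lines through `v` and `w` that cross `ℓ`; hence it is the point of `ℓ` on
the line through `u` that crosses `ℓ` (`exists_unique_collinear`).
-/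

namespace Moore57

variable {α : Type*}

/-- The local form of being a Moore graph of diameter 2: there are no triangles and no
quadrilaterals, and distinct nonadjacent vertices have a common neighbour. -/
structure IsMoore (G : SimpleGraph α) : Prop where
  triangle : ∀ {a b c}, G.Adj a b → G.Adj b c → G.Adj a c → False
  unique : ∀ {p q c d}, p ≠ q → G.Adj p c → G.Adj q c → G.Adj p d → G.Adj q d → c = d
  common : ∀ {p q}, p ≠ q → ¬ G.Adj p q → ∃ c, G.Adj p c ∧ G.Adj q c

/-- `z` is neither equal nor adjacent to `x` or `y`; in a graph of diameter 2 this says that `z` is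
at distance 2 from both. -/
def Far (G : SimpleGraph α) (x y z : α) : Prop :=
  (z ≠ x ∧ ¬ G.Adj x z) ∧ (z ≠ y ∧ ¬ G.Adj y z)

/-- `p` and `q` are distinct and lie on a common line of the grid: they have a common neighbour
which is adjacent to `x` or to `y`. -/
def Collinear (G : SimpleGraph α) (x y p q : α) : Prop :=
  p ≠ q ∧ ∃ c, (G.Adj x c ∨ G.Adj y c) ∧ G.Adj p c ∧ G.Adj q c

variable {G : SimpleGraph α} {x y : α}

lemma Far.swap {z : α} (h : Far G x y z) : Far G y x z := ⟨h.2, h.1⟩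

lemma collinear_swap {p q : α} : Collinear G y x p q ↔ Collinear G x y p q := by
  simp only [Collinear, or_comm]

lemma isMoore_of_isSRGWith [Fintype α] [DecidableEq α] [DecidableRel G.Adj] {n k : ℕ}
    (hG : G.IsSRGWith n k 0 1) : IsMoore G := by
  have tri : ∀ {a b c}, G.Adj a b → G.Adj b c → G.Adj a c → False := by
    intro a b c hab hbc hac
    have h := hG.of_adj a c hac
    have : b ∈ G.commonNeighbors a c := ⟨hab, hbc.symm⟩
    rw [Fintype.card_eq_zero_iff] at h
    exact h.elim ⟨b, this⟩
  refine ⟨tri, ?_, ?_⟩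
  · intro p q c d hpq hpc hqc hpd hqd
    have h := hG.of_not_adj hpq (fun h => tri h hqc hpc)
    have := (Fintype.card_le_one_iff.mp h.le)
      (⟨c, hpc, hqc⟩ : G.commonNeighbors p q) ⟨d, hpd, hqd⟩
    exact congrArg Subtype.val this
  · intro p q hpq hn
    have h := hG.of_not_adj hpq hn
    obtain ⟨⟨c, hc⟩, -⟩ := Fintype.card_eq_one_iff.mp h
    exact ⟨c, hc.1, hc.2⟩

lemma dist_eq_two_iff (hM : IsMoore G) {a z : α} : G.dist a z = 2 ↔ z ≠ a ∧ ¬ G.Adj a z := by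
  constructor
  · intro h
    refine ⟨?_, fun h' => ?_⟩
    · rintro rfl
      simp at h
    · rw [← dist_eq_one_iff_adj] at h'
      omega
  · rintro ⟨h1, h2⟩
    obtain ⟨c, hc, hc'⟩ := hM.common h1.symm h2
    have hw := dist_le (Walk.cons hc (Walk.cons hc'.symm Walk.nil))
    have hr : G.Reachable a z := ⟨Walk.cons hc (Walk.cons hc'.symm Walk.nil)⟩
    have h0 := hr.pos_dist_of_ne h1.symm
    have h1' : G.dist a z ≠ 1 := fun h => h2 (dist_eq_one_iff_adj.mp h)
    simp only [Walk.length_cons, Walk.length_nil] at hw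
    omega

/-- Two distinct vertices on a common line through a neighbour of `x` are joined by a path of
length 3 inside the set of far vertices. -/
lemma exists_path_three_aux (hM : IsMoore G)
    (hdeg : ∀ (p a b d : α), ∃ m, G.Adj p m ∧ m ≠ a ∧ m ≠ b ∧ m ≠ d)
    {p q c : α} (hp : Far G x y p) (hq : Far G x y q) (hpq : p ≠ q)
    (hc : G.Adj x c) (hpc : G.Adj p c) (hqc : G.Adj q c) :
    ∃ m n, Far G x y m ∧ Far G x y n ∧ G.Adj p m ∧ G.Adj m n ∧ G.Adj n q := by
  obtain ⟨b, hyb, hpb⟩ := hM.common hp.2.1.symm hp.2.2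
  obtain ⟨e, hye, hqe⟩ := hM.common hq.2.1.symm hq.2.2
  have hpe : p ≠ e := by
    rintro rfl
    exact hp.2.2 hye
  -- `d` is the only neighbour of `p`, if any, on the line of `q` through the neighbour `e` of `y`
  obtain ⟨d, hd⟩ : ∃ d, ∀ m, G.Adj p m → G.Adj m e → m = d := by
    by_cases h : ∃ d, G.Adj p d ∧ G.Adj d e
    · obtain ⟨d, h1, h2⟩ := h
      exact ⟨d, fun m h3 h4 => hM.unique hpe h3 h4.symm h1 h2.symm⟩
    · exact ⟨p, fun m h3 h4 => (h ⟨m, h3, h4⟩).elim⟩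
  obtain ⟨m, hpm, hmc, hmb, hmd⟩ := hdeg p c b d
  have hmq : ¬ G.Adj m q := fun h => hmc (hM.unique hpq hpm h.symm hpc hqc)
  have hmq' : m ≠ q := by
    rintro rfl
    exact hM.triangle hpm hqc hpc
  obtain ⟨n, hmn, hqn⟩ := hM.common hmq' hmq
  have hxm : ¬ G.Adj x m := fun h => hmc (hM.unique hp.1.1 hpm h hpc hc)
  have hym : ¬ G.Adj y m := fun h => hmb (hM.unique hp.2.1 hpm h hpb hyb)
  refine ⟨m, n, ⟨⟨?_, hxm⟩, ⟨?_, hym⟩⟩, ⟨⟨?_, ?_⟩, ⟨?_, ?_⟩⟩, hpm, hmn, hqn.symm⟩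
  · rintro rfl
    exact hp.1.2 hpm.symm
  · rintro rfl
    exact hp.2.2 hpm.symm
  · rintro rfl
    exact hxm hmn.symm
  · intro h
    obtain rfl := hM.unique hq.1.1 hqn h hqc hc
    exact hM.triangle hpm hmn hpc
  · rintro rfl
    exact hym hmn.symm
  · intro h
    obtain rfl := hM.unique hq.2.1 hqn h hqe hye
    exact hmd (hd m hpm hmn)

lemma exists_path_three (hM : IsMoore G)
    (hdeg : ∀ (p a b d : α), ∃ m, G.Adj p m ∧ m ≠ a ∧ m ≠ b ∧ m ≠ d)
    {p q : α} (hp : Far G x y p) (hq : Far G x y q)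
    (h : Collinear G x y p q) :
    ∃ m n, Far G x y m ∧ Far G x y n ∧ G.Adj p m ∧ G.Adj m n ∧ G.Adj n q := by
  obtain ⟨hpq, c, hc | hc, hpc, hqc⟩ := h
  · exact exists_path_three_aux hM hdeg hp hq hpq hc hpc hqc
  · obtain ⟨m, n, hm, hn, h⟩ :=
      exists_path_three_aux hM hdeg hp.swap hq.swap hpq hc hpc hqc
    exact ⟨m, n, hm.swap, hn.swap, h⟩

/-- The case of `exists_unique_collinear` in which the line through `v` and `w` comes from a
neighbour `c` of `x`. -/
lemma exists_unique_collinear_aux (hM : IsMoore G) (hxy : G.Adj x y) {u v w c : α}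
    (hu : Far G x y u) (hv : Far G x y v) (hw : Far G x y w) (hvw : v ≠ w)
    (hc : G.Adj x c) (hvc : G.Adj v c) (hwc : G.Adj w c) (huv : u ≠ v) (huw : u ≠ w)
    (huv' : ¬ Collinear G x y u v) (huw' : ¬ Collinear G x y u w) :
    ∃ z, Far G x y z ∧
      (Collinear G x y z u ∧ Collinear G x y z v ∧ Collinear G x y z w) ∧
      ∀ t, Far G x y t → Collinear G x y t u → Collinear G x y t v →
        Collinear G x y t w → t = z := by
  obtain ⟨b, hyb, hub⟩ := hM.common hu.2.1.symm hu.2.2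
  have huc : ¬ G.Adj u c := fun h => huv' ⟨huv, c, .inl hc, h, hvc⟩
  have hvb : ¬ G.Adj v b := fun h => huv' ⟨huv, b, .inr hyb, hub, h⟩
  have hwb : ¬ G.Adj w b := fun h => huw' ⟨huw, b, .inr hyb, hub, h⟩
  have hcy : ¬ G.Adj y c := fun h => hM.triangle hxy h hc
  have hxb : ¬ G.Adj x b := fun h => hM.triangle hxy hyb h
  have hcb : c ≠ b := by
    rintro rfl
    exact hcy hyb
  have hcy' : c ≠ y := by
    rintro rfl
    exact hv.2.2 hvc.symm
  have hbx : x ≠ b := by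
    rintro rfl
    exact hu.1.2 hub.symm
  -- an edge `c b` would close the quadrilateral `x c b y`
  have hcb' : ¬ G.Adj c b := fun h => hcy' (hM.unique hbx hc h.symm hxy hyb.symm)
  obtain ⟨z, hcz, hbz⟩ := hM.common hcb hcb'
  refine ⟨z, ⟨⟨?_, fun h => hM.triangle hc hcz h⟩, ⟨?_, fun h => hM.triangle hyb hbz h⟩⟩,
    ⟨⟨?_, b, .inr hyb, hbz.symm, hub⟩, ⟨?_, c, .inl hc, hcz.symm, hvc⟩,
      ⟨?_, c, .inl hc, hcz.symm, hwc⟩⟩, ?_⟩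
  · rintro rfl
    exact hxb hbz.symm
  · rintro rfl
    exact hcy hcz.symm
  · rintro rfl
    exact huc hcz.symm
  · rintro rfl
    exact hvb hbz.symm
  · rintro rfl
    exact hwb hbz.symm
  · rintro t ht ⟨htu, e, he, hte, hue⟩ ⟨htv, f, hf, htf, hvf⟩ ⟨htw, g, hg, htg, hwg⟩
    -- `t` is on the line of `c`: otherwise `f` and `g` are both the common neighbour of `t` and `y`,
    -- and this vertex would be adjacent to `v` and `w` as `c` is
    have htc : G.Adj t c := by
      rcases hf with hf | hf
      · exact hM.unique hv.1.1 hvf hf hvc hc ▸ htf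
      rcases hg with hg | hg
      · exact hM.unique hw.1.1 hwg hg hwc hc ▸ htg
      have h1 : f = g := hM.unique ht.2.1 htf hf htg hg
      subst h1
      have h2 : f = c := hM.unique hvw hvf hwg hvc hwc
      exact h2 ▸ htf
    have htb : G.Adj t b := by
      rcases he with he | he
      · have h1 : e = c := hM.unique ht.1.1 hte he htc hc
        exact (huc (h1 ▸ hue)).elim
      · exact hM.unique hu.2.1 hue he hub hyb ▸ hte
    exact hM.unique hcb htc.symm htb.symm hcz hbz

lemma exists_unique_collinear (hM : IsMoore G) (hxy : G.Adj x y) {u v w : α}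
    (hu : Far G x y u) (hv : Far G x y v) (hw : Far G x y w) (hvw : Collinear G x y v w)
    (huv : u ≠ v) (huw : u ≠ w)
    (huv' : ¬ Collinear G x y u v) (huw' : ¬ Collinear G x y u w) :
    ∃ z, Far G x y z ∧
      (Collinear G x y z u ∧ Collinear G x y z v ∧ Collinear G x y z w) ∧
      ∀ t, Far G x y t → Collinear G x y t u → Collinear G x y t v →
        Collinear G x y t w → t = z := by
  obtain ⟨hne, c, hc | hc, hvc, hwc⟩ := hvw
  · exact exists_unique_collinear_aux hM hxy hu hv hw hne hc hvc hwc huv huw huv' huw'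
  · obtain ⟨z, hz, hz', h⟩ := exists_unique_collinear_aux hM hxy.symm hu.swap hv.swap hw.swap hne
      hc hvc hwc huv huw (mt collinear_swap.mp huv') (mt collinear_swap.mp huw')
    simp only [collinear_swap] at hz' h
    exact ⟨z, hz.swap, hz', fun t ht => h t ht.swap⟩

/-- Distances in the graph induced on the far vertices: at most 3, and equal to 3 exactly for
collinear vertices. -/
lemma dist_eq_three_iff (hM : IsMoore G)
    (hdeg : ∀ (p a b d : α), ∃ m, G.Adj p m ∧ m ≠ a ∧ m ≠ b ∧ m ≠ d)
    {S : Set α} (hS : ∀ z, z ∈ S ↔ Far G x y z) (p q : S) :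
    (G.induce S).dist p q ≤ 3 ∧
      ((G.induce S).dist p q = 3 ↔ Collinear G x y (p : α) (q : α)) := by
  obtain ⟨p, hpS⟩ := p
  obtain ⟨q, hqS⟩ := q
  have hp := (hS p).1 hpS
  have hq := (hS q).1 hqS
  by_cases hcol : Collinear G x y p q
  · obtain ⟨m, n, hm, hn, hpm, hmn, hnq⟩ := exists_path_three hM hdeg hp hq hcol
    have a1 : (G.induce S).Adj ⟨p, hpS⟩ ⟨m, (hS m).2 hm⟩ := hpm
    have a2 : (G.induce S).Adj ⟨m, (hS m).2 hm⟩ ⟨n, (hS n).2 hn⟩ := hmn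
    have a3 : (G.induce S).Adj ⟨n, (hS n).2 hn⟩ ⟨q, hqS⟩ := hnq
    let W := Walk.cons a1 (Walk.cons a2 (Walk.cons a3 Walk.nil))
    have hle : (G.induce S).dist ⟨p, hpS⟩ ⟨q, hqS⟩ ≤ 3 := dist_le W
    refine ⟨hle, fun _ => hcol, fun _ => ?_⟩
    obtain ⟨hpq, c, hc, hpc, hqc⟩ := hcol
    obtain ⟨P, hP⟩ := (Walk.reachable W).exists_walk_length_eq_dist
    rw [← hP] at hle ⊢
    match P, hle with
    | .nil, _ => exact (hpq rfl).elim
    | .cons h .nil, _ => exact (hM.triangle h hqc hpc).elim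
    | .cons (v := r) h (.cons h' .nil), _ =>
      have hr := (hS r.1).1 r.2
      have h1 : r.1 = c := hM.unique hpq h (G.adj_symm h') hpc hqc
      rcases hc with hc | hc
      · exact (hr.1.2 (h1 ▸ hc)).elim
      · exact (hr.2.2 (h1 ▸ hc)).elim
    | .cons _ (.cons _ (.cons _ P')), hle =>
      simp only [Walk.length_cons] at hle ⊢
      omega
  · suffices h : (G.induce S).dist ⟨p, hpS⟩ ⟨q, hqS⟩ ≤ 2 from
      ⟨by omega, fun h' => by omega, fun h' => (hcol h').elim⟩
    by_cases hpq : p = q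
    · subst hpq
      simp
    by_cases hadj : G.Adj p q
    · have a1 : (G.induce S).Adj ⟨p, hpS⟩ ⟨q, hqS⟩ := hadj
      exact (dist_eq_one_iff_adj.mpr a1).le.trans one_le_two
    obtain ⟨c, hpc, hqc⟩ := hM.common hpq hadj
    have hcS : c ∈ S := by
      rw [hS]
      refine ⟨⟨?_, fun h => hcol ⟨hpq, c, .inl h, hpc, hqc⟩⟩,
        ⟨?_, fun h => hcol ⟨hpq, c, .inr h, hpc, hqc⟩⟩⟩
      · rintro rfl
        exact hp.1.2 hpc.symm
      · rintro rfl
        exact hp.2.2 hpc.symm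
    have a1 : (G.induce S).Adj ⟨p, hpS⟩ ⟨c, hcS⟩ := hpc
    have a2 : (G.induce S).Adj ⟨c, hcS⟩ ⟨q, hqS⟩ := hqc.symm
    exact dist_le (Walk.cons a1 (Walk.cons a2 Walk.nil))

end Moore57

open Moore57 in
/-- Lemma 2(b). In the distance-regular graph `Γ` induced by a Moore graph of
degree 57 on the common distance-2 neighbors of two adjacent vertices `x, y`, if `u, v, w` have
pairwise distances `U = d(v,w) ≥ V = d(u,w) ≥ W = d(u,v)` and exactly one of `U, V, W` equals 3,
then there is exactly one vertex `z` at distance 3 from all of `u`, `v`, `w`. -/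
theorem moore57_x333_exactly_one_eq_three
    {α : Type*} [Fintype α] [DecidableEq α] (G : SimpleGraph α) [DecidableRel G.Adj]
    (hG : G.IsSRGWith 3250 57 0 1)
    (x y : α) (hxy : G.Adj x y)
    (Γ : SimpleGraph {v : α | G.dist x v = 2 ∧ G.dist y v = 2})
    (hΓ : Γ = G.induce {v : α | G.dist x v = 2 ∧ G.dist y v = 2})
    (u v w : {v : α | G.dist x v = 2 ∧ G.dist y v = 2})
    (U V W : ℕ)
    (hU : U = Γ.dist v w) (hV : V = Γ.dist u w) (hW : W = Γ.dist u v)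
    (hUV : V ≤ U) (hVW : W ≤ V)
    (hone : (U = 3 ∧ V ≠ 3 ∧ W ≠ 3) ∨ (U ≠ 3 ∧ V = 3 ∧ W ≠ 3) ∨ (U ≠ 3 ∧ V ≠ 3 ∧ W = 3)) :
    {z : {v : α | G.dist x v = 2 ∧ G.dist y v = 2} |
      Γ.dist z u = 3 ∧ Γ.dist z v = 3 ∧ Γ.dist z w = 3}.ncard = 1 := by
  have hM := isMoore_of_isSRGWith hG
  have hdeg : ∀ (p a b d : α), ∃ m, G.Adj p m ∧ m ≠ a ∧ m ≠ b ∧ m ≠ d := by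
    intro p a b d
    have h57 : (G.neighborFinset p).card = 57 := hG.regular.degree_eq p
    have h3 : ({a, b, d} : Finset α).card ≤ 3 := Finset.card_le_three
    obtain ⟨m, hm, hm'⟩ := Finset.exists_mem_notMem_of_card_lt_card
      (s := {a, b, d}) (t := G.neighborFinset p) (by omega)
    simp only [Finset.mem_insert, Finset.mem_singleton, not_or] at hm'
    exact ⟨m, by simpa using hm, hm'⟩
  have hS : ∀ z, z ∈ {v : α | G.dist x v = 2 ∧ G.dist y v = 2} ↔ Far G x y z := by
    intro z
    simp only [Set.mem_ofPred_eq, dist_eq_two_iff hM, Far]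
  subst hΓ
  have key := dist_eq_three_iff hM hdeg hS
  have hU3 := (key v w).1
  have hV3 := (key u w).1
  -- since no distance exceeds 3, only the largest one, `U`, can be the one equal to 3
  obtain ⟨hU', hV', hW'⟩ : U = 3 ∧ V ≠ 3 ∧ W ≠ 3 := by omega
  have huv : (u : α) ≠ v := by
    intro h
    obtain rfl := Subtype.ext h
    omega
  have huw : (u : α) ≠ w := by
    intro h
    obtain rfl := Subtype.ext h
    rw [SimpleGraph.dist_comm] at hU
    omega
  obtain ⟨z, hz, ⟨hzu, hzv, hzw⟩, huniq⟩ := exists_unique_collinear hM hxy ((hS u).1 u.2)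
    ((hS v).1 v.2) ((hS w).1 w.2) ((key v w).2.1 (by omega)) huv huw
    (fun h => hW' (hW.trans ((key u v).2.2 h))) (fun h => hV' (hV.trans ((key u w).2.2 h)))
  rw [Set.ncard_eq_one]
  refine ⟨⟨z, (hS z).2 hz⟩, Set.eq_singleton_iff_unique_mem.mpr ⟨?_, ?_⟩⟩
  · exact ⟨(key _ _).2.2 hzu, (key _ _).2.2 hzv, (key _ _).2.2 hzw⟩
  · rintro t ⟨h1, h2, h3⟩
    exact Subtype.ext (huniq t ((hS t).1 t.2) ((key _ _).2.1 h1) ((key _ _).2.1 h2)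
      ((key _ _).2.1 h3))
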